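/- Let M be a random variable and let A_1,…,A_n and a_1,…,a_n be (joint) random variables on the same probability space such that H(M | A_i, a_i) = 0 for every 1 ≤ i ≤ n, and H(a_j | A_i) = 0 for all 1 ≤ i < j ≤ n. If moreover H(a_n | a_1, …, a_{n−1}) = 0, then n·H(M) ≤ Σ_{i=1}^n H(A_i) + Σ_{i=1}^{n−1} H(a_i). -/

import Mathlib

open Finset

/-- Shannon entropy (base 2) of a finitely-valued random variable `X` on a finite
probability space with mass function `P`. -/
noncomputable def entH {Ω S : Type*} [Fintype Ω] (P : Ω → ℝ) (X : Ω → S) : ℝ :=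
  letI := Classical.decEq S
  ∑ s ∈ Finset.univ.image X,
    -((∑ ω ∈ Finset.univ.filter (fun ω => X ω = s), P ω) *
       Real.logb 2 (∑ ω ∈ Finset.univ.filter (fun ω => X ω = s), P ω))

/-- Conditional entropy `H(X | Y) = H(X, Y) - H(Y)`. -/
noncomputable def condH {Ω S T : Type*} [Fintype Ω] (P : Ω → ℝ) (X : Ω → S) (Y : Ω → T) : ℝ :=
  entH P (fun ω => (X ω, Y ω)) - entH P Y

/-- The joint random variable `W_J = (W_j : j ∈ J)`. -/
def jointW {Ω : Type*} {n : ℕ} {σW : Fin n → Type*} (W : ∀ j, Ω → σW j)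
    (J : Finset (Fin n)) : Ω → ∀ j : J, σW j.1 :=
  fun ω j => W j.1 ω

/-- The joint random variable `(S_i^j : (i,j) ∈ E)` for a set `E` of pairs. -/
def jointS {Ω : Type*} {n : ℕ} {σS : Fin n → Fin n → Type*} (S : ∀ i j, Ω → σS i j)
    (E : Finset (Fin n × Fin n)) : Ω → ∀ e : E, σS e.1.1 e.1.2 :=
  fun ω e => S e.1.1 e.1.2 ω

/-- The joint random variable `S_I^j = (S_i^j : i ∈ I)`. -/
def jointSto {Ω : Type*} {n : ℕ} {σS : Fin n → Fin n → Type*} (S : ∀ i j, Ω → σS i j)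
    (I : Finset (Fin n)) (j : Fin n) : Ω → ∀ i : I, σS i.1 j :=
  fun ω i => S i.1 j ω

/-- An exact-repair regenerating code with parameters `(n,k,d)` (with `1 ≤ k ≤ d ≤ n-1`)
and secondary parameters `(B,α,β)`: the file `M`, the stored data `W j` on server `j`
(servers indexed by `Fin n`, server `j` of the paper being index `j-1`), and the helper
information `S i j` sent from server `i` to repair server `j`. -/
structure IsRegenCode {Ω : Type*} [Fintype Ω] (n k d : ℕ) (B α β : ℝ) (P : Ω → ℝ)
    {σM : Type*} {σW : Fin n → Type*} {σS : Fin n → Fin n → Type*}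
    (M : Ω → σM) (W : ∀ j, Ω → σW j) (S : ∀ i j, Ω → σS i j) : Prop where
  prob_nonneg : ∀ ω, 0 ≤ P ω
  prob_sum : ∑ ω, P ω = 1
  hk : 1 ≤ k
  hkd : k ≤ d
  hdn : d + 1 ≤ n
  hB : 0 ≤ B
  hα : 0 ≤ α
  hβ : 0 ≤ β
  hMB : entH P M = B
  hWα : ∀ j, entH P (W j) = α
  hWM : ∀ j, condH P (W j) M = 0
  hMW : ∀ J : Finset (Fin n), k ≤ J.card → condH P M (jointW W J) = 0
  hSβ : ∀ i j, i ≠ j → entH P (S i j) = β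
  hSW : ∀ i j, i ≠ j → condH P (S i j) (W i) = 0
  hWS : ∀ (j : Fin n) (I : Finset (Fin n)), d ≤ I.card → j ∉ I →
    condH P (W j) (jointSto S I j) = 0

/-- `B_q = qα + ((k-q)(k-q-1)/2)β + (d+1-k)(k-q)β`. -/
noncomputable def Bfun (k d q : ℕ) (α β : ℝ) : ℝ :=
  (q : ℝ) * α + (((k - q) * (k - q - 1) : ℕ) : ℝ) / 2 * β
    + (((d + 1 - k) * (k - q) : ℕ) : ℝ) * β

/-!
Write `a_{≥ i}` for `(a_i, …, a_n)` and `a_{> i}` for `(a_{i+1}, …, a_n)`. The pair `(A_i, a_{≥ i})`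
determines `M`, while each of `A_i` and `a_{≥ i}` determines `a_{> i}`, so submodularity gives
`H(M) + H(a_{> i}) ≤ H(A_i) + H(a_{≥ i})`. Summing over `i` telescopes to
`n H(M) ≤ ∑ H(A_i) + H(a_1, …, a_n)`. Since `a_n` is a function of the other `a_i`, the last term is
`H(a_1, …, a_{n-1})`, and subadditivity concludes.
-/

open Classical in
/-- The distribution of `X` under the weights `P`: `law P X s` is the total weight of `{X = s}`.
The weights are not assumed to sum to one. -/
noncomputable def law {Ω S : Type*} [Fintype Ω] (P : Ω → ℝ) (X : Ω → S) (s : S) : ℝ :=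
  ∑ ω with X ω = s, P ω

/-- `Y` determines `X` almost surely: outcomes of positive weight with the same value of `Y` have
the same value of `X`. -/
def Determines {Ω S T : Type*} (P : Ω → ℝ) (Y : Ω → T) (X : Ω → S) : Prop :=
  ∀ ω ω', 0 < P ω → 0 < P ω' → Y ω = Y ω' → X ω = X ω'

namespace Determines

variable {Ω S T U : Type*} {P : Ω → ℝ} {X : Ω → S} {Y : Ω → T} {Z : Ω → U}

lemma refl (P : Ω → ℝ) (X : Ω → S) : Determines P X X :=
  fun _ _ _ _ h => h

lemma comp_self (P : Ω → ℝ) (Y : Ω → T) (g : T → S) : Determines P Y fun ω => g (Y ω) :=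
  fun _ _ _ _ h => congrArg g h

lemma trans (hYX : Determines P Y X) (hXZ : Determines P X Z) : Determines P Y Z :=
  fun ω ω' hω hω' h => hXZ ω ω' hω hω' (hYX ω ω' hω hω' h)

lemma prodMk (hX : Determines P Y X) (hZ : Determines P Y Z) :
    Determines P Y fun ω => (X ω, Z ω) :=
  fun ω ω' hω hω' h => Prod.ext (hX ω ω' hω hω' h) (hZ ω ω' hω hω' h)

lemma pi {ι : Type*} {σ : ι → Type*} {X : ∀ i, Ω → σ i} (h : ∀ i, Determines P Y (X i)) :
    Determines P Y fun ω i => X i ω :=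
  fun ω ω' hω hω' hY => funext fun i => h i ω ω' hω hω' hY

lemma of_mem {ι : Type*} {σ : ι → Type*} (P : Ω → ℝ) (X : ∀ i, Ω → σ i) {s : Finset ι} {i : ι}
    (hi : i ∈ s) : Determines P (fun ω (j : s) => X j ω) (X i) :=
  fun _ _ _ _ h => congrFun h ⟨i, hi⟩

lemma joint_insert {ι : Type*} [DecidableEq ι] {σ : ι → Type*} (P : Ω → ℝ) (X : ∀ i, Ω → σ i)
    (i : ι) (s : Finset ι) : Determines P (fun ω => (X i ω, fun j : s => X j ω))
      fun ω (j : (insert i s : Finset ι)) => X j ω := by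
  refine pi fun ⟨j, hj⟩ => ?_
  rcases mem_insert.1 hj with rfl | hj
  · exact comp_self P (fun ω => (X j ω, fun k : s => X k ω)) Prod.fst
  · exact (comp_self P (fun ω => (X i ω, fun k : s => X k ω)) Prod.snd).trans (of_mem P X hj)

end Determines

section Law

variable {Ω S T U : Type*} [Fintype Ω] {P : Ω → ℝ}

lemma law_nonneg (hP : ∀ ω, 0 ≤ P ω) (X : Ω → S) (s : S) : 0 ≤ law P X s :=
  sum_nonneg fun ω _ => hP ω

lemma law_pos (hP : ∀ ω, 0 ≤ P ω) (X : Ω → S) {ω : Ω} (hω : 0 < P ω) : 0 < law P X (X ω) :=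
  hω.trans_le <| single_le_sum (fun ω' _ => hP ω') (by simp)

lemma sum_mul_comp (P : Ω → ℝ) {X : Ω → S} {t : Finset S} (ht : ∀ ω, X ω ∈ t) (f : S → ℝ) :
    ∑ ω, P ω * f (X ω) = ∑ s ∈ t, law P X s * f s := by
  classical
  rw [← sum_fiberwise_of_maps_to fun ω _ => ht ω]
  refine sum_congr rfl fun s _ => ?_
  rw [law, sum_mul]
  exact sum_congr (by congr!) fun ω hω => by rw [(mem_filter.1 hω).2]

lemma sum_law (P : Ω → ℝ) {X : Ω → S} {t : Finset S} (ht : ∀ ω, X ω ∈ t) :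
    ∑ s ∈ t, law P X s = ∑ ω, P ω := by
  simpa using (sum_mul_comp P ht 1).symm

lemma sum_law_prodMk (P : Ω → ℝ) {X : Ω → S} {t : Finset S} (ht : ∀ ω, X ω ∈ t) (Z : Ω → U)
    (z : U) : ∑ s ∈ t, law P (fun ω => (X ω, Z ω)) (s, z) = law P Z z := by
  classical
  simp only [law, Prod.mk.injEq]
  rw [← sum_fiberwise_of_maps_to fun ω _ => ht ω]
  refine sum_congr rfl fun s _ => sum_congr ?_ fun _ _ => rfl
  ext ω
  simp [and_comm]

lemma law_le_law_of_determines (hP : ∀ ω, 0 ≤ P ω) {X : Ω → S} {Y : Ω → T}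
    (h : Determines P Y X) {ω : Ω} (hω : 0 < P ω) : law P Y (Y ω) ≤ law P X (X ω) := by
  classical
  rw [law, law, sum_filter, sum_filter]
  refine sum_le_sum fun ω' _ => ?_
  rcases (hP ω').eq_or_lt with hω' | hω'
  · simp [← hω']
  · by_cases hY : Y ω' = Y ω
    · simp [hY, h ω' ω hω' hω hY]
    · simpa [hY] using ite_nonneg hω'.le le_rfl

lemma eq_of_law_prodMk_eq (hP : ∀ ω, 0 ≤ P ω) {X : Ω → S} {Y : Ω → T} {ω ω' : Ω}
    (h : law P (fun υ => (X υ, Y υ)) (X ω, Y ω) = law P Y (Y ω)) (hω' : 0 < P ω')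
    (hY : Y ω = Y ω') : X ω = X ω' := by
  classical
  by_contra hX
  refine h.not_lt (sum_lt_sum_of_subset (i := ω') ?_ ?_ ?_ hω' fun υ _ _ => hP υ)
  · intro υ
    simp +contextual
  · simp [hY]
  · simp [Ne.symm hX]

/- Grouped by values, the left side is at most the sum of `p(x,z) p(y,z) / p(z)` over all
`(x, y, z)`, and marginalizing `x` and `y` leaves the sum of `p(z)`. -/
lemma sum_mul_law_ratio_le (hP : ∀ ω, 0 ≤ P ω) (X : Ω → S) (Y : Ω → T) (Z : Ω → U) :
    ∑ ω, P ω * (law P (fun ω => (X ω, Z ω)) (X ω, Z ω) * law P (fun ω => (Y ω, Z ω)) (Y ω, Z ω) /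
      (law P (fun ω => (X ω, Y ω, Z ω)) (X ω, Y ω, Z ω) * law P Z (Z ω))) ≤ ∑ ω, P ω := by
  classical
  let pXZ := law P fun ω => (X ω, Z ω)
  let pYZ := law P fun ω => (Y ω, Z ω)
  let pXYZ := law P fun ω => (X ω, Y ω, Z ω)
  have hX : ∀ ω, X ω ∈ univ.image X := fun ω => mem_image_of_mem X (mem_univ ω)
  have hY : ∀ ω, Y ω ∈ univ.image Y := fun ω => mem_image_of_mem Y (mem_univ ω)
  have hZ : ∀ ω, Z ω ∈ univ.image Z := fun ω => mem_image_of_mem Z (mem_univ ω)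
  calc _ = ∑ v ∈ univ.image X ×ˢ univ.image Y ×ˢ univ.image Z,
        pXYZ v * (pXZ (v.1, v.2.2) * pYZ v.2 / (pXYZ v * law P Z v.2.2)) :=
      sum_mul_comp P (X := fun ω => (X ω, Y ω, Z ω))
        (fun ω => mem_product.2 ⟨hX ω, mem_product.2 ⟨hY ω, hZ ω⟩⟩)
        fun v => pXZ (v.1, v.2.2) * pYZ v.2 / (pXYZ v * law P Z v.2.2)
    _ ≤ ∑ v ∈ univ.image X ×ˢ univ.image Y ×ˢ univ.image Z,
        pXZ (v.1, v.2.2) * pYZ v.2 / law P Z v.2.2 := by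
      refine sum_le_sum fun v _ => ?_
      rcases eq_or_ne (pXYZ v) 0 with hv | hv
      · simpa [hv] using div_nonneg
          (mul_nonneg (law_nonneg hP _ _) (law_nonneg hP _ _)) (law_nonneg hP Z v.2.2)
      · rw [← mul_div_assoc, mul_div_mul_left _ _ hv]
    _ = ∑ z ∈ univ.image Z, law P Z z * law P Z z / law P Z z := by
      simp only [sum_product, sum_comm (t := univ.image Z), ← sum_div, ← mul_sum, ← sum_mul,
        pXZ, pYZ, sum_law_prodMk P hX, sum_law_prodMk P hY]
    _ = ∑ ω, P ω := by simp only [mul_self_div_self, sum_law P hZ]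

end Law

section Entropy

variable {Ω S T U V : Type*} [Fintype Ω] {P : Ω → ℝ}

lemma entH_eq_neg_sum_mul_logb (P : Ω → ℝ) (X : Ω → S) :
    entH P X = -∑ ω, P ω * Real.logb 2 (law P X (X ω)) := by
  classical
  rw [sum_mul_comp P (fun ω => mem_image_of_mem X (mem_univ ω)) fun s => Real.logb 2 (law P X s),
    ← sum_neg_distrib]
  simp only [entH, law]

lemma mul_logb_law_le_of_determines (hP : ∀ ω, 0 ≤ P ω) {X : Ω → S} {Y : Ω → T}
    (h : Determines P Y X) (ω : Ω) :
    P ω * Real.logb 2 (law P Y (Y ω)) ≤ P ω * Real.logb 2 (law P X (X ω)) := by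
  rcases (hP ω).eq_or_lt with hω | hω
  · simp [← hω]
  · exact mul_le_mul_of_nonneg_left (Real.logb_le_logb_of_le one_lt_two (law_pos hP Y hω)
      (law_le_law_of_determines hP h hω)) hω.le

lemma entH_le_of_determines (hP : ∀ ω, 0 ≤ P ω) {X : Ω → S} {Y : Ω → T}
    (h : Determines P Y X) : entH P X ≤ entH P Y := by
  rw [entH_eq_neg_sum_mul_logb, entH_eq_neg_sum_mul_logb, neg_le_neg_iff]
  exact sum_le_sum fun ω _ => mul_logb_law_le_of_determines hP h ω

lemma determines_of_condH_eq_zero (hP : ∀ ω, 0 ≤ P ω) {X : Ω → S} {Y : Ω → T}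
    (h : condH P X Y = 0) : Determines P Y X := by
  intro ω ω' hω hω' hY
  refine eq_of_law_prodMk_eq hP ?_ hω' hY
  have hle : ∀ υ ∈ univ, P υ * Real.logb 2 (law P (fun υ => (X υ, Y υ)) (X υ, Y υ)) ≤
      P υ * Real.logb 2 (law P Y (Y υ)) := fun υ _ =>
    mul_logb_law_le_of_determines hP (.comp_self P (fun υ => (X υ, Y υ)) Prod.snd) υ
  rw [condH, entH_eq_neg_sum_mul_logb, entH_eq_neg_sum_mul_logb] at h
  have heq := (sum_eq_sum_iff_of_le hle).1 (by linarith) ω (mem_univ ω)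
  exact Real.logb_injOn_pos one_lt_two (law_pos hP _ hω) (law_pos hP Y hω)
    (mul_left_cancel₀ hω.ne' heq)

lemma sum_mul_logb_nonpos {b : ℝ} (hb : 1 < b) (hP : ∀ ω, 0 ≤ P ω) {u : Ω → ℝ}
    (hu : ∀ ω, 0 < P ω → 0 < u ω) (hsum : ∑ ω, P ω * u ω ≤ ∑ ω, P ω) :
    ∑ ω, P ω * Real.logb b (u ω) ≤ 0 := by
  have hlog : ∀ ω, P ω * Real.log (u ω) ≤ P ω * u ω - P ω := fun ω => by
    rcases (hP ω).eq_or_lt with hω | hω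
    · simp [← hω]
    · nlinarith [Real.log_le_sub_one_of_pos (hu ω hω)]
  simp only [Real.logb, ← mul_div_assoc, ← sum_div]
  refine div_nonpos_of_nonpos_of_nonneg ?_ (Real.log_pos hb).le
  calc ∑ ω, P ω * Real.log (u ω) ≤ ∑ ω, (P ω * u ω - P ω) := sum_le_sum fun ω _ => hlog ω
    _ ≤ 0 := by rw [sum_sub_distrib]; exact sub_nonpos.2 hsum

lemma entH_submodular (hP : ∀ ω, 0 ≤ P ω) (X : Ω → S) (Y : Ω → T) (Z : Ω → U) :
    entH P (fun ω => (X ω, Y ω, Z ω)) + entH P Z ≤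
      entH P (fun ω => (X ω, Z ω)) + entH P fun ω => (Y ω, Z ω) := by
  have hpos : ∀ ω, 0 < P ω → 0 < law P (fun ω => (X ω, Z ω)) (X ω, Z ω) ∧
      0 < law P (fun ω => (Y ω, Z ω)) (Y ω, Z ω) ∧
      0 < law P (fun ω => (X ω, Y ω, Z ω)) (X ω, Y ω, Z ω) ∧ 0 < law P Z (Z ω) := fun ω hω =>
    ⟨law_pos hP _ hω, law_pos hP _ hω, law_pos hP _ hω, law_pos hP Z hω⟩
  have hgibbs := sum_mul_logb_nonpos one_lt_two hP
    (fun ω hω => by obtain ⟨hXZ, hYZ, hXYZ, hZ⟩ := hpos ω hω; positivity)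
    (sum_mul_law_ratio_le hP X Y Z)
  simp only [entH_eq_neg_sum_mul_logb]
  rw [← sub_nonneg, ← neg_nonpos]
  refine le_of_eq_of_le ?_ hgibbs
  simp only [← sum_neg_distrib, ← sum_add_distrib, ← sum_sub_distrib]
  refine sum_congr rfl fun ω _ => ?_
  rcases (hP ω).eq_or_lt with hω | hω
  · simp [← hω]
  obtain ⟨hXZ, hYZ, hXYZ, hZ⟩ := hpos ω hω
  rw [Real.logb_div (by positivity) (by positivity), Real.logb_mul hXZ.ne' hYZ.ne',
    Real.logb_mul hXYZ.ne' hZ.ne']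
  ring

lemma entH_add_entH_le_of_determines (hP : ∀ ω, 0 ≤ P ω)
    {X : Ω → S} {Y : Ω → T} {Z : Ω → U} {W : Ω → V}
    (hW : Determines P (fun ω => (X ω, Y ω)) W)
    (hX : Determines P X Z) (hY : Determines P Y Z) :
    entH P W + entH P Z ≤ entH P X + entH P Y :=
  calc entH P W + entH P Z ≤ entH P (fun ω => (X ω, Y ω, Z ω)) + entH P Z := by
        gcongr
        exact entH_le_of_determines hP ((Determines.comp_self P _ fun v => (v.1, v.2.1)).trans hW)
    _ ≤ entH P (fun ω => (X ω, Z ω)) + entH P fun ω => (Y ω, Z ω) := entH_submodular hP X Y Z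
    _ ≤ entH P X + entH P Y := by
        gcongr
        · exact entH_le_of_determines hP ((Determines.refl P X).prodMk hX)
        · exact entH_le_of_determines hP ((Determines.refl P Y).prodMk hY)

lemma entH_eq_zero_of_subsingleton [Subsingleton S] (hP1 : ∑ ω, P ω = 1) (X : Ω → S) :
    entH P X = 0 := by
  have hlaw : ∀ ω, law P X (X ω) = 1 := fun ω => by
    simp [law, Subsingleton.elim _ (X ω), hP1]
  simp [entH_eq_neg_sum_mul_logb, hlaw]

lemma entH_prodMk_le_add (hP : ∀ ω, 0 ≤ P ω) (hP1 : ∑ ω, P ω = 1) (X : Ω → S) (Y : Ω → T) :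
    entH P (fun ω => (X ω, Y ω)) ≤ entH P X + entH P Y := by
  have hsub := entH_add_entH_le_of_determines hP (.refl P fun ω => (X ω, Y ω))
    (.comp_self P X fun _ => ()) (.comp_self P Y fun _ => ())
  rwa [entH_eq_zero_of_subsingleton hP1 fun _ => (), add_zero] at hsub

variable {ι : Type*} {σ : ι → Type*}

lemma entH_pi_le_sum (hP : ∀ ω, 0 ≤ P ω) (hP1 : ∑ ω, P ω = 1) (X : ∀ i, Ω → σ i)
    (s : Finset ι) : entH P (fun ω (i : s) => X i ω) ≤ ∑ i ∈ s, entH P (X i) := by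
  classical
  induction s using Finset.induction_on with
  | empty => simp [entH_eq_zero_of_subsingleton hP1]
  | insert i s hi ih =>
    calc entH P (fun ω (j : (insert i s : Finset ι)) => X j ω)
        ≤ entH P fun ω => (X i ω, fun j : s => X j ω) :=
          entH_le_of_determines hP (.joint_insert P X i s)
      _ ≤ entH P (X i) + entH P fun ω (j : s) => X j ω := entH_prodMk_le_add hP hP1 _ _
      _ ≤ entH P (X i) + ∑ j ∈ s, entH P (X j) := by gcongr
      _ = ∑ j ∈ insert i s, entH P (X j) := by rw [sum_insert hi]

lemma card_mul_entH_le [LinearOrder ι] {τ : ι → Type*} (hP : ∀ ω, 0 ≤ P ω)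
    (hP1 : ∑ ω, P ω = 1) {M : Ω → S} {A : ∀ i, Ω → σ i} {a : ∀ i, Ω → τ i} (s : Finset ι)
    (hM : ∀ i ∈ s, Determines P (fun ω => (A i ω, a i ω)) M)
    (hA : ∀ i ∈ s, ∀ j ∈ s, i < j → Determines P (A i) (a j)) :
    #s * entH P M ≤ ∑ i ∈ s, entH P (A i) + entH P fun ω (i : s) => a i ω := by
  induction s using Finset.induction_on_min with
  | empty => simp [entH_eq_zero_of_subsingleton hP1]
  | insert i s hi ih =>
    have his : i ∉ s := fun h => (hi i h).false
    have hMi : Determines P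
        (fun ω => (A i ω, fun j : (insert i s : Finset ι) => a j ω)) M :=
      (Determines.comp_self P _ fun v => (v.1, v.2 ⟨i, mem_insert_self i s⟩)).trans
        (hM i (mem_insert_self i s))
    have hAi : Determines P (A i) fun ω (j : s) => a j ω :=
      .pi fun j => hA i (mem_insert_self i s) j (mem_insert_of_mem j.2) (hi j j.2)
    have hai : Determines P (fun ω (j : (insert i s : Finset ι)) => a j ω)
        fun ω (j : s) => a j ω :=
      .pi fun j => .of_mem P a (mem_insert_of_mem j.2)
    have hstep := entH_add_entH_le_of_determines hP hMi hAi hai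
    have hs := ih (fun j hj => hM j (mem_insert_of_mem hj))
      fun j hj k hk => hA j (mem_insert_of_mem hj) k (mem_insert_of_mem hk)
    rw [card_insert_of_notMem his, sum_insert his]
    push_cast
    linarith

end Entropy

/-- chain bound with `H(a_n | a_1,…,a_{n-1}) = 0`:
`n·H(M) ≤ Σ H(A_i) + Σ_{i=1}^{n-1} H(a_i)`. -/
theorem stmt_3 {Ω : Type*} [Fintype Ω] (P : Ω → ℝ)
    (hP0 : ∀ ω, 0 ≤ P ω) (hP1 : ∑ ω, P ω = 1)
    {n : ℕ} (hn : 0 < n) {σM : Type*} {σA σa : Fin n → Type*}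
    (M : Ω → σM) (A : ∀ i, Ω → σA i) (a : ∀ i, Ω → σa i)
    (h1 : ∀ i, condH P M (fun ω => (A i ω, a i ω)) = 0)
    (h2 : ∀ i j : Fin n, i < j → condH P (a j) (A i) = 0)
    (hlast : condH P (a ⟨n - 1, by omega⟩)
      (fun ω (i : {i : Fin n // (i : ℕ) < n - 1}) => a i.1 ω) = 0) :
    (n : ℝ) * entH P M ≤ ∑ i, entH P (A i)
      + ∑ i ∈ Finset.univ.filter (fun i : Fin n => (i : ℕ) < n - 1), entH P (a i) := by
  let front : Finset (Fin n) := univ.filter fun i => (i : ℕ) < n - 1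
  have hchain := card_mul_entH_le hP0 hP1 univ
    (fun i _ => determines_of_condH_eq_zero hP0 (h1 i))
    (fun i _ j _ hij => determines_of_condH_eq_zero hP0 (h2 i j hij))
  have hfront : ∀ i : Fin n, (i : ℕ) < n - 1 → Determines P (fun ω (j : front) => a j ω) (a i) :=
    fun i hi => .of_mem P a (mem_filter.2 ⟨mem_univ i, hi⟩)
  have hall : ∀ i, Determines P (fun ω (j : front) => a j ω) (a i) := fun i => by
    rcases lt_or_ge (i : ℕ) (n - 1) with hi | hi
    · exact hfront i hi
    · obtain rfl : i = ⟨n - 1, Nat.sub_one_lt hn.ne'⟩ := Fin.ext (by dsimp only; omega)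
      exact (Determines.pi fun j => hfront j.1 j.2).trans (determines_of_condH_eq_zero hP0 hlast)
  calc (n : ℝ) * entH P M
      ≤ ∑ i, entH P (A i) + entH P fun ω (i : (univ : Finset (Fin n))) => a i ω := by
        simpa using hchain
    _ ≤ ∑ i, entH P (A i) + entH P fun ω (j : front) => a j ω := by
        gcongr
        exact entH_le_of_determines hP0 (.pi fun i => hall i)
    _ ≤ ∑ i, entH P (A i) + ∑ i ∈ front, entH P (a i) := by
        gcongr
        exact entH_pi_le_sum hP0 hP1 a front
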